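/- A₁₁ divides f₁₁(x₁) − f₁₁^σ(x₂) in K[x₁,x₂], and moreover A₁₁(x₂,x₁) = −A₁₁^σ(x₁,x₂). -/

import Mathlib

/-!
Write `a` for `α`, so that `σ α = -1 - a` is the other root of `t² + t + 3`. Division of
`11 (f₁₁(x) - f₁₁^σ(y))` by `A₁₁(x, y)`, which is monic of degree 5 in `x`, leaves no remainder over
`ℤ[a]/(a² + a + 3)`. The quotient is `cofactor a x y`, so the divisibility reduces to the identity
`eleven_mul_sub_eq`, valid in every commutative ring where `a² + a + 3 = 0`. Characteristic zero
makes `11` invertible. The relation between `A₁₁` and its swap follows coefficient by coefficient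
from `σ α = -1 - α`, which sends `2α + 1` to its negative.
-/

open Polynomial in
/-- The polynomial `f₁₁` of Cassou-Noguès and Couveignes (degree 11 pair). -/
noncomputable def f₁₁ {K : Type*} [Field K] (α : K) : Polynomial K :=
  C (1/11 : K) * X ^ 11 + C α * X ^ 9 + C (2 : K) * X ^ 8 - C (3*(α + 4)) * X ^ 7
    + C (16*α) * X ^ 6 - C (3*(7*α - 5)) * X ^ 5 - C (30*(α + 4)) * X ^ 4
    + C (63*(α + 1)) * X ^ 3 - C (20*(5*α - 1)) * X ^ 2 - C (3*(8*α + 47)) * X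
    + C (18*α)

open MvPolynomial in
/-- The factor `A₁₁(x₁,x₂)` of `f₁₁(x₁) − f₁₁^σ(x₂)`. -/
noncomputable def A₁₁ {K : Type*} [Field K] (α : K) : MvPolynomial (Fin 2) K :=
  X 0 ^ 5 - C α * X 0 ^ 4 * X 1 - X 0 ^ 3 * X 1 ^ 2 + C (4*α + 2) * X 0 ^ 3
    + X 0 ^ 2 * X 1 ^ 3 + C (α + 6) * X 0 ^ 2 * X 1 - C (2*α - 10) * X 0 ^ 2
    - C (α + 1) * X 0 * X 1 ^ 4 + C (α - 5) * X 0 * X 1 ^ 2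
    - C (12*α + 6) * X 0 * X 1 + C (8*α - 7) * X 0 - X 1 ^ 5 + C (4*α + 2) * X 1 ^ 3
    - C (2*α + 12) * X 1 ^ 2 + C (8*α + 15) * X 1 + C (12*α + 6)

/-- The quotient of `11 (f₁₁(x) - f₁₁^σ(y))` by `A₁₁(x, y)`, with `a` in the role of `α`, evaluated
in an arbitrary commutative ring. -/
def cofactor {R : Type*} [CommRing R] (a x y : R) : R :=
  x ^ 6 + a * x ^ 5 * y + (-a - 2) * x ^ 4 * y ^ 2 + 2 * x ^ 3 * y ^ 3
      + (a - 1) * x ^ 2 * y ^ 4 + (-a - 1) * x * y ^ 5 + y ^ 6 + (7 * a - 2) * x ^ 4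
      + (-8 * a - 15) * x ^ 3 * y + 22 * x ^ 2 * y ^ 2 + (8 * a - 7) * x * y ^ 3
      + (-7 * a - 9) * y ^ 4 + (2 * a + 12) * x ^ 3 + (10 * a - 6) * x ^ 2 * y
      + (-10 * a - 16) * x * y ^ 2 + (-2 * a + 10) * y ^ 3 + (-19 * a - 37) * x ^ 2
      + 33 * x * y + (19 * a - 18) * y ^ 2 + (32 * a - 28) * x + (-32 * a - 60) * y + 33

/-- The factorization behind the divisibility, with `11` cleared from the leading coefficients.
It is an identity modulo `a² + a + 3`: the certificate in the proof is the exact quotient by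
`a² + a + 3` of the difference of the two sides, computed in `ℤ[a, x, y]`. -/
theorem eleven_mul_sub_eq {R : Type*} [CommRing R] (a x y : R) (ha : a ^ 2 + a + 3 = 0) :
    (x ^ 11 + 11 * (a * x ^ 9 + 2 * x ^ 8 - 3 * (a + 4) * x ^ 7 + 16 * a * x ^ 6
        - 3 * (7 * a - 5) * x ^ 5 - 30 * (a + 4) * x ^ 4 + 63 * (a + 1) * x ^ 3
        - 20 * (5 * a - 1) * x ^ 2 - 3 * (8 * a + 47) * x + 18 * a))
      - (y ^ 11 + 11 * ((-1 - a) * y ^ 9 + 2 * y ^ 8 - 3 * ((-1 - a) + 4) * y ^ 7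
        + 16 * (-1 - a) * y ^ 6 - 3 * (7 * (-1 - a) - 5) * y ^ 5 - 30 * ((-1 - a) + 4) * y ^ 4
        + 63 * ((-1 - a) + 1) * y ^ 3 - 20 * (5 * (-1 - a) - 1) * y ^ 2
        - 3 * (8 * (-1 - a) + 47) * y + 18 * (-1 - a)))
    = (x ^ 5 - a * x ^ 4 * y - x ^ 3 * y ^ 2 + (4 * a + 2) * x ^ 3 + x ^ 2 * y ^ 3
        + (a + 6) * x ^ 2 * y - (2 * a - 10) * x ^ 2 - (a + 1) * x * y ^ 4
        + (a - 5) * x * y ^ 2 - (12 * a + 6) * x * y + (8 * a - 7) * x - y ^ 5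
        + (4 * a + 2) * y ^ 3 - (2 * a + 12) * y ^ 2 + (8 * a + 15) * y + (12 * a + 6))
      * cofactor a x y := by
  unfold cofactor
  linear_combination (
    x ^ 9 * y ^ 2 - x ^ 8 * y ^ 3 + 2 * x ^ 6 * y ^ 5 - 2 * x ^ 5 * y ^ 6 + x ^ 3 * y ^ 8
      - x ^ 2 * y ^ 9 + 3 * x ^ 8 * y - 5 * x ^ 7 * y ^ 2 + 8 * x ^ 5 * y ^ 4
      - 8 * x ^ 4 * y ^ 5 + 5 * x ^ 2 * y ^ 7 - 3 * x * y ^ 8 + 4 * x ^ 7 * y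
      + 20 * x ^ 6 * y ^ 2 - 20 * x ^ 5 * y ^ 3 + 20 * x ^ 3 * y ^ 5 - 20 * x ^ 2 * y ^ 6
      - 4 * x * y ^ 7 - 28 * x ^ 7 - 2 * x ^ 6 * y + x ^ 5 * y ^ 2 - 25 * x ^ 4 * y ^ 3
      + 25 * x ^ 3 * y ^ 4 - x ^ 2 * y ^ 5 + 2 * x * y ^ 6 + 28 * y ^ 7 + 6 * x ^ 6
      + 46 * x ^ 5 * y - 74 * x ^ 4 * y ^ 2 + 74 * x ^ 2 * y ^ 4 - 46 * x * y ^ 5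
      - 6 * y ^ 6 + 24 * x ^ 5 + 71 * x ^ 4 * y + 111 * x ^ 3 * y ^ 2 - 111 * x ^ 2 * y ^ 3
      - 71 * x * y ^ 4 - 24 * y ^ 5 - 266 * x ^ 4 - 132 * x ^ 3 * y + 132 * x * y ^ 3
      + 266 * y ^ 4 + 192 * x ^ 3 + 352 * x ^ 2 * y - 352 * x * y ^ 2 - 192 * y ^ 3
      - 28 * x ^ 2 + 28 * y ^ 2 - 384 * x + 384 * y) * ha

/-- `A₁₁` divides `f₁₁(x₁) − f₁₁^σ(x₂)` in `K[x₁,x₂]`, and moreover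
`A₁₁(x₂,x₁) = −A₁₁^σ(x₁,x₂)`. -/
theorem A₁₁_dvd_and_swap
    {K : Type*} [Field K] [CharZero K] (α : K) (σ : K →+* K)
    (hα : α^2 + α + 3 = 0) (hσ : σ α = -1 - α) :
    (A₁₁ α ∣
        Polynomial.aeval (MvPolynomial.X 0 : MvPolynomial (Fin 2) K) (f₁₁ α)
          - Polynomial.aeval (MvPolynomial.X 1 : MvPolynomial (Fin 2) K) ((f₁₁ α).map σ))
      ∧ MvPolynomial.rename (Equiv.swap (0 : Fin 2) 1) (A₁₁ α)
          = - MvPolynomial.map σ (A₁₁ α) := by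
  constructor
  · open MvPolynomial in
    have ha : (C α : MvPolynomial (Fin 2) K) ^ 2 + C α + 3 = 0 := by
      have h := congrArg (C : K → MvPolynomial (Fin 2) K) hα
      simpa only [map_add, map_pow, map_ofNat, map_zero] using h
    have h11 : (C (1 / 11 : K) : MvPolynomial (Fin 2) K) * 11 = 1 := by
      rw [← map_ofNat (C : K →+* MvPolynomial (Fin 2) K) 11, ← C_mul]
      norm_num
    have key := eleven_mul_sub_eq (C α : MvPolynomial (Fin 2) K) (X 0) (X 1) ha
    refine ⟨C (1 / 11) * cofactor (C α) (X 0) (X 1), ?_⟩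
    have hσ11 : σ (1 / 11) = 1 / 11 := by rw [map_div₀, map_one, map_ofNat]
    rw [mul_left_comm]
    simp only [f₁₁, A₁₁, Polynomial.map_add, Polynomial.map_sub, Polynomial.map_mul,
      Polynomial.map_pow, Polynomial.map_C, Polynomial.map_X, Polynomial.map_ofNat,
      Polynomial.map_one, Polynomial.aeval_C, Polynomial.aeval_X, algebraMap_eq,
      map_add, map_sub, map_mul, map_pow, map_ofNat, map_one, map_neg, hσ, hσ11]
    rw [← key]
    -- The two sides differ only by the factor `11 * (1 / 11)` on the terms of degree below 11.
    generalize (C (1 / 11 : K) : MvPolynomial (Fin 2) K) = c at h11 ⊢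
    clear key
    grind
  · simp only [A₁₁, map_add, map_sub, map_mul, map_pow, map_ofNat, map_one, map_neg,
      MvPolynomial.rename_X, MvPolynomial.rename_C, MvPolynomial.map_X, MvPolynomial.map_C, Equiv.swap_apply_left,
      Equiv.swap_apply_right, hσ]
    ring
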